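/- Let K be a totally real biquadratic field and let 1 < m < s < t be the three square-free integers whose square roots lie in K. Suppose m ≢ 1 (mod 4), m ∉ {2, 3, 6, 7}, and s ∈ {m+4, m+8, m+12}. Then the Pythagoras number of O_K is at least 5. Moreover, the element α = 15 + (1+√m)² (if s = m+4) or α = 28 + (1+√m)² (if s = m+8 or s = m+12) has length exactly 5, unless (m,s) is one of the 16 pairs (10,14), (11,15), (15,19), (14,22), (22,30), (26,34), (11,19), (15,23), (23,31), (10,22), (14,26), (22,34), (26,38), (11,23), (19,31), (23,35); in these exceptional fields the element 7 + ((√m+√s)/2)² has length exactly 5. -/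

import Mathlib

/-!
The proof compares coefficients in a hypothetical representation as a sum of four squares.

Put `g = gcd(m, s)`, `m = g m₁`, `s = g s₁` and `n = m₁ s₁`, so that `√n = √m√s / g`. The elements
`1, √m, √s, √m√s` are independent over `ℚ` (`sqrt_indep`) and span `K` (`field_form`). Conjugates
of integers are integral (`isIntegral_conj`), so relative traces and norms to the quadratic
subfields show that every integer of `K` is `(a + b√m + c√s + d√n) / 2` with `a ≡ d` and `b ≡ c`
modulo 2, and with `a`, `d` even if `n ≡ 3 (mod 4)` (`FieldData.integral_form`).

A sum of four squares therefore gives vectors `a, b, c, d ∈ ℤ⁴` for which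
`|a|² + m|b|² + s|c|² + n|d|²` is four times the rational part, together with three bilinear
equations (`FieldData.four_squares`). The size of `n` forces `d = 0`; the pairs `(39, 51)` and
`(30, 42)` need an extra word, since there `d ≠ 0` is only excluded because it would force
`b = c = 0`. With `d = 0`, write `a = 2w`, `b = u + v`, `c = u - v`.

* For `N + (1 + √m)²` with `N = 15` or `28` the equations become `|u|² = |v|²` and
  `w·u = w·v = 1`. As `m > N`, both `u` and `v` are unit vectors up to sign. If they have the same
  support, `N` is a sum of three squares; otherwise 12, 23 or 21 is a sum of two squares. Both are
  impossible (`alpha_core`).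
* For `7 + ((√m + √s)/2)²` they become `|u|² - |v|² = 1` and `w·u = w·v = 0`. The size
  of `m` forces `v = 0`, so `u` is a unit vector up to sign and 7 would be a sum of three squares
  (`exceptional_core`).

Five squares suffice because `15 = 9 + 4 + 1 + 1`, `28 = 25 + 1 + 1 + 1` and `7 = 4 + 1 + 1 + 1`.
-/

/-- The totally real biquadratic field `ℚ(√p, √q)` as a subfield of `ℝ`. -/
noncomputable def biqField (p q : ℕ) : IntermediateField ℚ ℝ :=
  IntermediateField.adjoin ℚ {Real.sqrt p, Real.sqrt q}

/-- The ring of integers of a subfield `K` of `ℝ`, viewed as the set of elements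
of `K` that are integral over `ℤ`. -/
def ringOfInt (K : IntermediateField ℚ ℝ) : Set ℝ :=
  {x : ℝ | x ∈ K ∧ IsIntegral ℤ x}

/-- `α` is a sum of `n` squares of elements of `S`. -/
def SumOfNSquaresIn (S : Set ℝ) (n : ℕ) (α : ℝ) : Prop :=
  ∃ x : Fin n → ℝ, (∀ i, x i ∈ S) ∧ α = ∑ i, x i ^ 2

/-- `α` is a sum of squares of elements of `S`. -/
def IsSumOfSquaresIn (S : Set ℝ) (α : ℝ) : Prop := ∃ n, SumOfNSquaresIn S n α

/-- `K` is a totally real biquadratic field. -/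
def IsBiquadratic (K : IntermediateField ℚ ℝ) : Prop :=
  ∃ p q : ℕ, Squarefree p ∧ Squarefree q ∧ 1 < p ∧ 1 < q ∧ p ≠ q ∧ K = biqField p q

/-! ### Quadratic irrationalities and integrality -/

theorem rat_sq_eq_mul_sq {k : ℕ} (hk : ¬ IsSquare k) {f h : ℚ} (e : f ^ 2 = k * h ^ 2) :
    h = 0 := by
  by_contra hh
  apply hk
  rw [← Rat.isSquare_natCast_iff]
  exact ⟨f / h, by field_simp; linarith⟩

theorem not_isSquare_of_squarefree {k : ℕ} (h : Squarefree k) (h1 : 1 < k) : ¬ IsSquare k := by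
  rintro ⟨c, rfl⟩
  have := h c dvd_rfl
  rw [Nat.isUnit_iff] at this
  subst this
  omega

/-- If none of `m`, `s`, `ms` is a square, then `1, √m, √s, √m√s` are linearly independent over `ℚ`. -/
theorem sqrt_indep {m s : ℕ} (hm : ¬ IsSquare m) (hs : ¬ IsSquare s) (hms : ¬ IsSquare (m * s))
    {f₀ f₁ f₂ f₃ : ℚ}
    (h : (f₀ : ℝ) + f₁ * √(m : ℝ) + f₂ * √(s : ℝ) + f₃ * (√(m : ℝ) * √(s : ℝ)) = 0) :
    f₀ = 0 ∧ f₁ = 0 ∧ f₂ = 0 ∧ f₃ = 0 := by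
  have hr : √(m : ℝ) ^ 2 = m := Real.sq_sqrt (by positivity)
  have hw : √(s : ℝ) ^ 2 = s := Real.sq_sqrt (by positivity)
  set r := √(m : ℝ)
  set w := √(s : ℝ)
  -- the case of a single quadratic irrationality
  have key : ∀ a b : ℚ, (a : ℝ) + b * r = 0 → a = 0 ∧ b = 0 := by
    intro a b hab
    have e : (a : ℝ) ^ 2 = m * (b : ℝ) ^ 2 := by
      have : (a : ℝ) = -(b * r) := by linarith
      rw [this, ← hr]; ring
    have hb : b = 0 := rat_sq_eq_mul_sq hm (f := a) (by exact_mod_cast e)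
    subst hb
    simpa using hab
  have e : ((f₀ ^ 2 + m * f₁ ^ 2 - s * f₂ ^ 2 - s * m * f₃ ^ 2 : ℚ) : ℝ)
      + ((2 * (f₀ * f₁ - s * (f₂ * f₃)) : ℚ) : ℝ) * r = 0 := by
    -- isolating the multiples of `√s` and squaring
    have h2 : ((f₀ : ℝ) + f₁ * r) ^ 2 = w ^ 2 * (f₂ + f₃ * r) ^ 2 := by
      have : (f₀ : ℝ) + f₁ * r = -(w * (f₂ + f₃ * r)) := by linarith
      rw [this]; ring
    rw [hw] at h2
    push_cast
    linear_combination h2 + (s * (f₃ : ℝ) ^ 2 - (f₁ : ℝ) ^ 2) * hr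
  obtain ⟨e1, e2⟩ := key _ _ e
  have m0 : (m : ℚ) ≠ 0 := by
    rintro h0; apply hm; rw [Nat.cast_eq_zero.mp h0]; exact ⟨0, rfl⟩
  have s0 : (s : ℚ) ≠ 0 := by
    rintro h0; apply hs; rw [Nat.cast_eq_zero.mp h0]; exact ⟨0, rfl⟩
  -- eliminating `f₁` from `e1` and `e2`
  have e3 : (f₀ ^ 2 - s * f₂ ^ 2) * (f₀ ^ 2 - s * m * f₃ ^ 2) = 0 := by
    have e2' : f₀ * f₁ = s * (f₂ * f₃) := by linarith
    linear_combination f₀ ^ 2 * e1 - m * (f₀ * f₁ + s * (f₂ * f₃)) * e2'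
  rcases mul_eq_zero.mp e3 with e4 | e4
  · have h2 : f₂ = 0 := rat_sq_eq_mul_sq hs (f := f₀) (by linarith)
    subst h2
    have h0 : f₀ = 0 := by simpa using e4
    subst h0
    have h3 : f₃ = 0 := rat_sq_eq_mul_sq hs (f := f₁) (by
      apply mul_left_cancel₀ m0; linarith)
    subst h3
    simp [m0] at e1
    simp [e1]
  · have h3 : f₃ = 0 := rat_sq_eq_mul_sq hms (f := f₀) (by push_cast; linarith)
    subst h3
    have h0 : f₀ = 0 := by simpa using e4
    subst h0
    have h2 : f₂ = 0 := rat_sq_eq_mul_sq hms (f := m * f₁) (by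
      push_cast; linear_combination m * e1)
    subst h2
    simp [m0] at e1
    simp [e1]

/-- Changing the signs of `√m` and `√s` (here through `e₁, e₂ = ±1`) preserves integrality: the value
of an integer polynomial at the conjugate is the conjugate of its value. -/
theorem isIntegral_conj {m s : ℕ} (hm : ¬ IsSquare m) (hs : ¬ IsSquare s)
    (hms : ¬ IsSquare (m * s)) {q₀ q₁ q₂ q₃ : ℚ}
    (hx : IsIntegral ℤ
      ((q₀ : ℝ) + q₁ * √(m : ℝ) + q₂ * √(s : ℝ) + q₃ * (√(m : ℝ) * √(s : ℝ))))
    {e₁ e₂ : ℝ} (he₁ : e₁ ^ 2 = 1) (he₂ : e₂ ^ 2 = 1) :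
    IsIntegral ℤ ((q₀ : ℝ) + q₁ * (e₁ * √(m : ℝ)) + q₂ * (e₂ * √(s : ℝ))
      + q₃ * ((e₁ * √(m : ℝ)) * (e₂ * √(s : ℝ)))) := by
  obtain ⟨p, hp, hpx⟩ := hx
  refine ⟨p, hp, ?_⟩
  have hr : √(m : ℝ) ^ 2 = m := Real.sq_sqrt (by positivity)
  have hw : √(s : ℝ) ^ 2 = s := Real.sq_sqrt (by positivity)
  rw [← Polynomial.aeval_def] at hpx ⊢
  -- every integer polynomial takes conjugate values at conjugate arguments
  have key : ∀ P : Polynomial ℤ, ∃ f₀ f₁ f₂ f₃ : ℚ,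
      Polynomial.aeval ((q₀ : ℝ) + q₁ * √(m : ℝ) + q₂ * √(s : ℝ)
        + q₃ * (√(m : ℝ) * √(s : ℝ))) P
        = (f₀ : ℝ) + f₁ * √(m : ℝ) + f₂ * √(s : ℝ) + f₃ * (√(m : ℝ) * √(s : ℝ)) ∧
      Polynomial.aeval ((q₀ : ℝ) + q₁ * (e₁ * √(m : ℝ)) + q₂ * (e₂ * √(s : ℝ))
        + q₃ * ((e₁ * √(m : ℝ)) * (e₂ * √(s : ℝ)))) P
        = (f₀ : ℝ) + f₁ * (e₁ * √(m : ℝ)) + f₂ * (e₂ * √(s : ℝ))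
          + f₃ * ((e₁ * √(m : ℝ)) * (e₂ * √(s : ℝ))) := by
    intro P
    induction P using Polynomial.induction_on with
    | C a => exact ⟨a, 0, 0, 0, by simp, by simp⟩
    | add P Q hP hQ =>
      obtain ⟨f₀, f₁, f₂, f₃, h1, h2⟩ := hP
      obtain ⟨k₀, k₁, k₂, k₃, h3, h4⟩ := hQ
      refine ⟨f₀ + k₀, f₁ + k₁, f₂ + k₂, f₃ + k₃, ?_, ?_⟩
      · rw [map_add, h1, h3]; push_cast; ring
      · rw [map_add, h2, h4]; push_cast; ring
    | monomial n a hP =>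
      obtain ⟨f₀, f₁, f₂, f₃, h1, h2⟩ := hP
      refine ⟨f₀ * q₀ + m * f₁ * q₁ + s * f₂ * q₂ + m * s * f₃ * q₃,
        f₀ * q₁ + f₁ * q₀ + s * (f₂ * q₃ + f₃ * q₂),
        f₀ * q₂ + f₂ * q₀ + m * (f₁ * q₃ + f₃ * q₁),
        f₀ * q₃ + f₃ * q₀ + f₁ * q₂ + f₂ * q₁, ?_, ?_⟩
      · rw [pow_succ, ← mul_assoc (Polynomial.C a), map_mul, h1, Polynomial.aeval_X]
        push_cast
        generalize √(m : ℝ) = R at *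
        generalize √(s : ℝ) = W at *
        rw [← hr, ← hw]
        ring
      · rw [pow_succ, ← mul_assoc (Polynomial.C a), map_mul, h2, Polynomial.aeval_X]
        push_cast
        have hr' : (m : ℝ) = (e₁ * √(m : ℝ)) ^ 2 := by rw [mul_pow, he₁, hr, one_mul]
        have hw' : (s : ℝ) = (e₂ * √(s : ℝ)) ^ 2 := by rw [mul_pow, he₂, hw, one_mul]
        generalize e₁ * √(m : ℝ) = R at *
        generalize e₂ * √(s : ℝ) = W at *
        rw [hr', hw']
        ring
  obtain ⟨f₀, f₁, f₂, f₃, h1, h2⟩ := key p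
  rw [hpx] at h1
  obtain ⟨rfl, rfl, rfl, rfl⟩ := sqrt_indep hm hs hms h1.symm
  rw [h2]
  simp

theorem rat_int_of_isIntegral {q : ℚ} (h : IsIntegral ℤ (q : ℝ)) : ∃ z : ℤ, q = z := by
  have h' : IsIntegral ℤ q := by
    rw [← isIntegral_algebraMap_iff (B := ℝ) (algebraMap ℚ ℝ).injective]
    simpa using h
  obtain ⟨z, hz⟩ := IsIntegrallyClosed.isIntegral_iff.mp h'
  exact ⟨z, by simpa using hz.symm⟩

/-- If `k` is squarefree and `kB²` is an integer, then so is `B`: the square of the denominator of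
`B` divides `k`. -/
theorem int_of_squarefree_mul_sq {k : ℕ} (hk : Squarefree k) {B : ℚ} {z : ℤ}
    (h : (k : ℚ) * B ^ 2 = z) : ∃ y : ℤ, B = y := by
  have hb : (B.den : ℚ) ≠ 0 := by exact_mod_cast B.den_ne_zero
  have e : (k : ℤ) * B.num ^ 2 = z * B.den ^ 2 := by
    have : (k : ℚ) * (B.num : ℚ) ^ 2 = z * (B.den : ℚ) ^ 2 := by
      rw [← h]
      conv_rhs => rw [← Rat.num_div_den B]
      field_simp
      rw [Rat.num_div_den]
    exact_mod_cast this
  have d1 : (B.den : ℤ) ^ 2 ∣ (k : ℤ) * B.num ^ 2 := ⟨z, by rw [e]; ring⟩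
  have cop : IsCoprime ((B.den : ℤ) ^ 2) (B.num ^ 2) := by
    apply IsCoprime.pow
    rw [Int.isCoprime_iff_gcd_eq_one]
    have := B.reduced
    rw [Int.gcd_comm]
    simpa [Int.gcd] using this
  have d2 : (B.den : ℤ) ^ 2 ∣ (k : ℤ) := cop.dvd_of_dvd_mul_right d1
  have d3 : B.den * B.den ∣ k := by
    rw [← sq]; exact_mod_cast d2
  have := hk _ d3
  rw [Nat.isUnit_iff] at this
  exact ⟨B.num, by conv_lhs => rw [← Rat.num_div_den B, this]
                   simp⟩

theorem sq_emod_four (a : ℤ) : (a % 2 = 0 ∧ a ^ 2 % 4 = 0) ∨ (a % 2 = 1 ∧ a ^ 2 % 4 = 1) := by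
  rcases Int.emod_two_eq_zero_or_one a with h | h
  · left
    obtain ⟨k, rfl⟩ : ∃ k, a = 2 * k := ⟨a / 2, by omega⟩
    exact ⟨h, by ring_nf; omega⟩
  · right
    obtain ⟨k, rfl⟩ : ∃ k, a = 2 * k + 1 := ⟨a / 2, by omega⟩
    exact ⟨h, by ring_nf; omega⟩

/-- For squarefree `m ≡ 2, 3 (mod 4)` the integers of `ℚ(√m)` are `ℤ[√m]`. Integrality of the
conjugate is a separate hypothesis. -/
theorem quadratic_int {m : ℕ} (hm : Squarefree m) (hm4 : m % 4 = 2 ∨ m % 4 = 3) {A B : ℚ}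
    (h1 : IsIntegral ℤ ((A : ℝ) + B * √(m : ℝ))) (h2 : IsIntegral ℤ ((A : ℝ) - B * √(m : ℝ))) :
    (∃ x : ℤ, A = x) ∧ ∃ y : ℤ, B = y := by
  have hr : √(m : ℝ) ^ 2 = m := Real.sq_sqrt (by positivity)
  obtain ⟨a, ha⟩ := rat_int_of_isIntegral (q := 2 * A) (by
    have h := h1.add h2
    rwa [show (A : ℝ) + B * √(m : ℝ) + (A - B * √(m : ℝ)) = ((2 * A : ℚ) : ℝ) by
      push_cast; ring] at h)
  obtain ⟨c, hc⟩ := rat_int_of_isIntegral (q := A ^ 2 - m * B ^ 2) (by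
    have h := h1.mul h2
    rwa [show ((A : ℝ) + B * √(m : ℝ)) * (A - B * √(m : ℝ)) = ((A ^ 2 - m * B ^ 2 : ℚ) : ℝ) by
      push_cast; linear_combination (-(B : ℝ) ^ 2) * hr] at h)
  obtain ⟨b, hb⟩ := int_of_squarefree_mul_sq hm (B := 2 * B) (z := a ^ 2 - 4 * c) (by
    push_cast; rw [← ha, ← hc]; ring)
  have e : a ^ 2 - m * b ^ 2 = 4 * c := by
    have : (a : ℚ) ^ 2 - m * (b : ℚ) ^ 2 = 4 * c := by rw [← ha, ← hb, ← hc]; ring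
    exact_mod_cast this
  have par : a % 2 = 0 ∧ b % 2 = 0 := by
    have e4 : ((m : ℤ) * b ^ 2) % 4 = a ^ 2 % 4 := by omega
    rw [Int.mul_emod] at e4
    have hm4' : (m : ℤ) % 4 = 2 ∨ (m : ℤ) % 4 = 3 := by omega
    rcases sq_emod_four a with ⟨h, h'⟩ | ⟨h, h'⟩ <;> rcases sq_emod_four b with ⟨k, k'⟩ | ⟨k, k'⟩ <;>
      rcases hm4' with h4 | h4 <;> rw [h', k', h4] at e4 <;> omega
  obtain ⟨x, hx⟩ : ∃ x, a = 2 * x := ⟨a / 2, by omega⟩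
  obtain ⟨y, hy⟩ : ∃ y, b = 2 * y := ⟨b / 2, by omega⟩
  rw [hx] at ha
  rw [hy] at hb
  push_cast at ha hb
  exact ⟨⟨x, by linarith⟩, ⟨y, by linarith⟩⟩

/-! ### Integers of the biquadratic field -/

/-- The arithmetic of a pair `m, s`: a common factor `g` with cofactors `m₁`, `s₁`, and the third
radicand `n = m₁s₁`, so that `√n = √m√s / g`. The congruences are those of the case `m ≡ s` and
`m ≢ 1 (mod 4)`. The order relation between `m`, `s` and `n` plays no role. -/
structure FieldData (m s g m₁ s₁ n : ℕ) : Prop where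
  m_eq : m = g * m₁
  s_eq : s = g * s₁
  n_eq : n = m₁ * s₁
  sq_m : Squarefree m
  sq_s : Squarefree s
  sq_n : Squarefree n
  one_lt_m : 1 < m
  one_lt_s : 1 < s
  one_lt_n : 1 < n
  mod_s : s % 4 = m % 4
  mod_m : m % 4 = 2 ∨ m % 4 = 3
  s₁_odd : s₁ % 2 = 1
  n_odd : n % 2 = 1
  mod_n : m % 4 = 3 → n % 4 = 1

namespace FieldData

variable {m s g m₁ s₁ n : ℕ}

theorem g_pos (D : FieldData m s g m₁ s₁ n) : 0 < g := by
  have := D.m_eq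
  have := D.one_lt_m
  rcases Nat.eq_zero_or_pos g with h | h
  · subst h; omega
  · exact h

theorem not_sq_m (D : FieldData m s g m₁ s₁ n) : ¬ IsSquare m :=
  not_isSquare_of_squarefree D.sq_m D.one_lt_m

theorem not_sq_s (D : FieldData m s g m₁ s₁ n) : ¬ IsSquare s :=
  not_isSquare_of_squarefree D.sq_s D.one_lt_s

theorem ms_eq (D : FieldData m s g m₁ s₁ n) : m * s = g ^ 2 * n := by
  rw [D.m_eq, D.s_eq, D.n_eq]; ring

theorem not_sq_ms (D : FieldData m s g m₁ s₁ n) : ¬ IsSquare (m * s) := by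
  rintro ⟨k, hk⟩
  have h : (g : ℚ) = 0 := by
    refine rat_sq_eq_mul_sq (not_isSquare_of_squarefree D.sq_n D.one_lt_n) (f := k) ?_
    have : k * k = g ^ 2 * n := by rw [← hk, D.ms_eq]
    have h2 : k ^ 2 = n * g ^ 2 := by linarith
    exact_mod_cast h2
  have := D.g_pos
  have h' : g = 0 := by exact_mod_cast h
  omega

/-- The parity conditions on the coordinates of an integer, read off from its relative norm
to `ℚ(√m)`, which is `X + Y√m`. -/
theorem parity (D : FieldData m s g m₁ s₁ n) {a b c d X Y : ℤ}
    (h1 : a ^ 2 + m * b ^ 2 - s * c ^ 2 - n * d ^ 2 = 4 * X) (h2 : a * b - s₁ * (c * d) = 2 * Y) :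
    a % 2 = d % 2 ∧ b % 2 = c % 2 ∧ (n % 4 = 3 → d % 2 = 0) := by
  have hs := D.mod_s
  have hm := D.mod_m
  have hs1 := D.s₁_odd
  have hn := D.n_odd
  have hn3 := D.mod_n
  obtain ⟨k, hk⟩ : ∃ k : ℤ, (s : ℤ) = m + 4 * k := ⟨(s / 4 : ℤ) - m / 4, by omega⟩
  obtain ⟨l, hl⟩ : ∃ l : ℤ, (s₁ : ℤ) = 2 * l + 1 := ⟨(s₁ / 2 : ℤ), by omega⟩
  have h1' : a ^ 2 % 4 + ((m : ℤ) % 4) * (b ^ 2 % 4) + 3 * (((m : ℤ) % 4) * (c ^ 2 % 4))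
      + 3 * (((n : ℤ) % 4) * (d ^ 2 % 4)) ≡ 0 [ZMOD 4] := by
    have e : a ^ 2 + m * b ^ 2 + 3 * (m * c ^ 2) + 3 * (n * d ^ 2) ≡ 0 [ZMOD 4] := by
      rw [Int.modEq_zero_iff_dvd]
      exact ⟨X + k * c ^ 2 + m * c ^ 2 + n * d ^ 2, by rw [hk] at h1; linear_combination h1⟩
    refine Int.ModEq.trans ?_ e
    gcongr <;> exact Int.mod_modEq _ _
  have h2' : ((a % 2) * (b % 2) + (c % 2) * (d % 2)) ≡ 0 [ZMOD 2] := by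
    have e : a * b + c * d ≡ 0 [ZMOD 2] := by
      rw [Int.modEq_zero_iff_dvd]
      exact ⟨Y + l * (c * d) + c * d, by rw [hl] at h2; linear_combination h2⟩
    refine Int.ModEq.trans ?_ e
    gcongr <;> exact Int.mod_modEq _ _
  rw [Int.ModEq] at h1' h2'
  have hm' : ((m : ℤ) % 4 = 2 ∧ ((n : ℤ) % 4 = 1 ∨ (n : ℤ) % 4 = 3)) ∨
      ((m : ℤ) % 4 = 3 ∧ (n : ℤ) % 4 = 1) := by omega
  have hn4 : n % 4 = 3 ↔ (n : ℤ) % 4 = 3 := by omega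
  rw [hn4]
  rcases sq_emod_four a with ⟨ha, ha'⟩ | ⟨ha, ha'⟩ <;>
  rcases sq_emod_four b with ⟨hb, hb'⟩ | ⟨hb, hb'⟩ <;>
  rcases sq_emod_four c with ⟨hc, hc'⟩ | ⟨hc, hc'⟩ <;>
  rcases sq_emod_four d with ⟨hd, hd'⟩ | ⟨hd, hd'⟩ <;>
  rcases hm' with ⟨h4, h5 | h5⟩ | ⟨h4, h5⟩ <;>
  rw [ha', hb', hc', hd', h4, h5] at h1' <;> rw [ha, hb, hc, hd] at h2' <;>
  rw [ha, hb, hc, hd, h5] <;> revert h1' h2' <;> decide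

/-- Integers of `ℚ(√m, √s)` have the form `(a + b√m + c√s + d√n) / 2` with `a ≡ d` and `b ≡ c`
modulo 2, and with `a`, `d` even when `n ≡ 3 (mod 4)`. Here `√n = √m√s / g`, which is why `g`
appears in the coordinate of `√m√s`. -/
theorem integral_form (D : FieldData m s g m₁ s₁ n) {q₀ q₁ q₂ q₃ : ℚ}
    (hx : IsIntegral ℤ
      ((q₀ : ℝ) + q₁ * √(m : ℝ) + q₂ * √(s : ℝ) + q₃ * (√(m : ℝ) * √(s : ℝ)))) :
    ∃ a b c d : ℤ, 2 * q₀ = a ∧ 2 * q₁ = b ∧ 2 * q₂ = c ∧ 2 * g * q₃ = d ∧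
      a % 2 = d % 2 ∧ b % 2 = c % 2 ∧ (n % 4 = 3 → d % 2 = 0) := by
  have hr : √(m : ℝ) ^ 2 = m := Real.sq_sqrt (by positivity)
  have hw : √(s : ℝ) ^ 2 = s := Real.sq_sqrt (by positivity)
  have x1 := isIntegral_conj D.not_sq_m D.not_sq_s D.not_sq_ms hx (e₁ := 1) (e₂ := -1)
    (by norm_num) (by norm_num)
  have x2 := isIntegral_conj D.not_sq_m D.not_sq_s D.not_sq_ms hx (e₁ := -1) (e₂ := 1)
    (by norm_num) (by norm_num)
  have x3 := isIntegral_conj D.not_sq_m D.not_sq_s D.not_sq_ms hx (e₁ := -1) (e₂ := -1)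
    (by norm_num) (by norm_num)
  have hms := D.ms_eq
  have hg : (g : ℚ) ≠ 0 := by exact_mod_cast D.g_pos.ne'
  have mod_s : s % 4 = 2 ∨ s % 4 = 3 := by rw [D.mod_s]; exact D.mod_m
  -- traces to `ℚ(√m)` and `ℚ(√s)`
  obtain ⟨⟨a, ha⟩, b, hb⟩ := quadratic_int D.sq_m D.mod_m (A := 2 * q₀) (B := 2 * q₁)
    (by refine (congrArg (IsIntegral ℤ) ?_).mp (hx.add x1); push_cast; ring)
    (by refine (congrArg (IsIntegral ℤ) ?_).mp (x2.add x3); push_cast; ring)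
  obtain ⟨-, c, hc⟩ := quadratic_int D.sq_s mod_s (A := 2 * q₀) (B := 2 * q₂)
    (by refine (congrArg (IsIntegral ℤ) ?_).mp (hx.add x2); push_cast; ring)
    (by refine (congrArg (IsIntegral ℤ) ?_).mp (x1.add x3); push_cast; ring)
  -- norm to `ℚ` of the trace to the third quadratic subfield
  obtain ⟨z, hz⟩ := rat_int_of_isIntegral (q := (2 * q₀) ^ 2 - m * s * (2 * q₃) ^ 2) (by
    refine (congrArg (IsIntegral ℤ) ?_).mp ((hx.add x3).mul (x1.add x2))
    push_cast; rw [← hr, ← hw]; simp only [Real.sqrt_sq (Real.sqrt_nonneg _)]; ring)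
  obtain ⟨d, hd⟩ := int_of_squarefree_mul_sq D.sq_n (B := 2 * g * q₃) (z := a ^ 2 - z) (by
    have e : (m : ℚ) * s = g ^ 2 * n := by exact_mod_cast hms
    push_cast
    rw [← ha, ← hz, e]; ring)
  -- norm to `ℚ(√m)`
  obtain ⟨⟨X, hX⟩, Y, hY⟩ := quadratic_int D.sq_m D.mod_m
    (A := q₀ ^ 2 + m * q₁ ^ 2 - s * q₂ ^ 2 - m * s * q₃ ^ 2) (B := 2 * (q₀ * q₁ - s * (q₂ * q₃)))
    (by
      refine (congrArg (IsIntegral ℤ) ?_).mp (hx.mul x1)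
      push_cast; rw [← hr, ← hw]; simp only [Real.sqrt_sq (Real.sqrt_nonneg _)]; ring)
    (by
      refine (congrArg (IsIntegral ℤ) ?_).mp (x2.mul x3)
      push_cast; rw [← hr, ← hw]; simp only [Real.sqrt_sq (Real.sqrt_nonneg _)]; ring)
  refine ⟨a, b, c, d, ha, hb, hc, hd, D.parity (X := X) (Y := Y) ?_ ?_⟩
  · have e : (m : ℚ) * s = g ^ 2 * n := by exact_mod_cast hms
    have : (a : ℚ) ^ 2 + m * b ^ 2 - s * c ^ 2 - n * d ^ 2 = 4 * X := by
      rw [← ha, ← hb, ← hc, ← hd, ← hX]; linear_combination (4 * q₃ ^ 2) * e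
    exact_mod_cast this
  · have e : (s : ℚ) = g * s₁ := by exact_mod_cast D.s_eq
    have : (a : ℚ) * b - s₁ * (c * d) = 2 * Y := by
      rw [← ha, ← hb, ← hc, ← hd, ← hY, e]; ring
    exact_mod_cast this

end FieldData

/-! ### Coefficient comparison for sums of four squares -/

/-- `1, √p, √q, √p√q` span `ℚ(√p, √q)` over `ℚ`. -/
theorem biqField_form {p q : ℕ} {x : ℝ} (hx : x ∈ biqField p q) :
    ∃ f₀ f₁ f₂ f₃ : ℚ,
      x = (f₀ : ℝ) + f₁ * √(p : ℝ) + f₂ * √(q : ℝ) + f₃ * (√(p : ℝ) * √(q : ℝ)) := by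
  have hr : √(p : ℝ) ^ 2 = p := Real.sq_sqrt (by positivity)
  have hw : √(q : ℝ) ^ 2 = q := Real.sq_sqrt (by positivity)
  have alg : ∀ y ∈ ({√(p : ℝ), √(q : ℝ)} : Set ℝ), IsAlgebraic ℚ y := by
    have (k : ℕ) : IsAlgebraic ℚ √(k : ℝ) := by
      apply IsIntegral.isAlgebraic
      apply IsIntegral.of_pow (n := 2) (by norm_num)
      rw [Real.sq_sqrt (by positivity)]
      exact isIntegral_algebraMap (R := ℚ) (x := (k : ℚ)) |> fun h => by simpa using h
    rintro y (rfl | rfl) <;> apply this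
  have hx' : x ∈ Algebra.adjoin ℚ ({√(p : ℝ), √(q : ℝ)} : Set ℝ) := by
    rw [← IntermediateField.adjoin_toSubalgebra_of_isAlgebraic alg]
    exact hx
  clear hx
  induction hx' using Algebra.adjoin_induction with
  | mem y hy =>
    rcases hy with rfl | rfl
    · exact ⟨0, 1, 0, 0, by simp⟩
    · exact ⟨0, 0, 1, 0, by simp⟩
  | algebraMap k => exact ⟨k, 0, 0, 0, by simp⟩
  | add y z _ _ hy hz =>
    obtain ⟨f₀, f₁, f₂, f₃, rfl⟩ := hy
    obtain ⟨k₀, k₁, k₂, k₃, rfl⟩ := hz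
    exact ⟨f₀ + k₀, f₁ + k₁, f₂ + k₂, f₃ + k₃, by push_cast; ring⟩
  | mul y z _ _ hy hz =>
    obtain ⟨f₀, f₁, f₂, f₃, rfl⟩ := hy
    obtain ⟨q₀, q₁, q₂, q₃, rfl⟩ := hz
    refine ⟨f₀ * q₀ + p * f₁ * q₁ + q * f₂ * q₂ + p * q * f₃ * q₃,
      f₀ * q₁ + f₁ * q₀ + q * (f₂ * q₃ + f₃ * q₂),
      f₀ * q₂ + f₂ * q₀ + p * (f₁ * q₃ + f₃ * q₁),
      f₀ * q₃ + f₃ * q₀ + f₁ * q₂ + f₂ * q₁, ?_⟩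
    push_cast
    generalize √(p : ℝ) = R at *
    generalize √(q : ℝ) = W at *
    rw [← hr, ← hw]
    ring

/-- `1, √m, √s, √m√s` span `K`, because they are four independent elements of a space of dimension
at most four. -/
theorem field_form {K : IntermediateField ℚ ℝ} (hK : IsBiquadratic K) {m s : ℕ}
    (hm : ¬ IsSquare m) (hs : ¬ IsSquare s) (hms : ¬ IsSquare (m * s))
    (hmK : √(m : ℝ) ∈ K) (hsK : √(s : ℝ) ∈ K) {x : ℝ} (hx : x ∈ K) :
    ∃ f₀ f₁ f₂ f₃ : ℚ,
      x = (f₀ : ℝ) + f₁ * √(m : ℝ) + f₂ * √(s : ℝ) + f₃ * (√(m : ℝ) * √(s : ℝ)) := by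
  obtain ⟨p, q, -, -, -, -, -, rfl⟩ := hK
  let v : Fin 4 → ℝ := ![1, √(m : ℝ), √(s : ℝ), √(m : ℝ) * √(s : ℝ)]
  let u : Fin 4 → ℝ := ![1, √(p : ℝ), √(q : ℝ), √(p : ℝ) * √(q : ℝ)]
  have hu : ∀ y ∈ biqField p q, y ∈ Submodule.span ℚ (Set.range u) := by
    intro y hy
    obtain ⟨f₀, f₁, f₂, f₃, rfl⟩ := biqField_form hy
    rw [Submodule.mem_span_range_iff_exists_fun]
    exact ⟨![f₀, f₁, f₂, f₃], by simp [Fin.sum_univ_four, u, Algebra.smul_def]⟩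
  have hv : LinearIndependent ℚ v := by
    rw [Fintype.linearIndependent_iff]
    intro f hf
    rw [Fin.sum_univ_four] at hf
    simp only [v, Algebra.smul_def] at hf
    obtain ⟨h0, h1, h2, h3⟩ := sqrt_indep hm hs hms (f₀ := f 0) (f₁ := f 1) (f₂ := f 2)
      (f₃ := f 3) (by simpa using hf)
    intro i
    fin_cases i <;> assumption
  have hle : Submodule.span ℚ (Set.range v) ≤ Submodule.span ℚ (Set.range u) := by
    rw [Submodule.span_le]
    rintro _ ⟨i, rfl⟩
    apply hu
    fin_cases i
    · exact one_mem _
    · exact hmK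
    · exact hsK
    · exact mul_mem hmK hsK
  have : FiniteDimensional ℚ (Submodule.span ℚ (Set.range u)) :=
    FiniteDimensional.span_of_finite ℚ (Set.finite_range u)
  have heq := Submodule.eq_of_le_of_finrank_le hle (by
    rw [finrank_span_eq_card hv]
    exact finrank_range_le_card u)
  have hx' := hu x hx
  rw [← heq, Submodule.mem_span_range_iff_exists_fun] at hx'
  obtain ⟨f, hf⟩ := hx'
  refine ⟨f 0, f 1, f 2, f 3, ?_⟩
  rw [← hf, Fin.sum_univ_four]
  simp [v, Algebra.smul_def]

/-- Coefficient comparison for `A₀ + A₁√m + A₃√m√s` written as a sum of four squares of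
`(aᵢ + bᵢ√m + cᵢ√s + dᵢ√n) / 2`. -/
theorem FieldData.four_squares {K : IntermediateField ℚ ℝ} (hK : IsBiquadratic K)
    {m s g m₁ s₁ n : ℕ} (D : FieldData m s g m₁ s₁ n)
    (hmK : √(m : ℝ) ∈ K) (hsK : √(s : ℝ) ∈ K) {A₀ A₁ A₃ : ℚ}
    (h : SumOfNSquaresIn (ringOfInt K) 4 (A₀ + A₁ * √(m : ℝ) + A₃ * (√(m : ℝ) * √(s : ℝ)))) :
    ∃ a b c d : Fin 4 → ℤ,
      (∀ i, a i % 2 = d i % 2 ∧ b i % 2 = c i % 2 ∧ (n % 4 = 3 → d i % 2 = 0)) ∧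
      ((∑ i, a i ^ 2 + m * ∑ i, b i ^ 2 + s * ∑ i, c i ^ 2 + n * ∑ i, d i ^ 2 : ℤ) : ℚ)
        = 4 * A₀ ∧
      ((∑ i, a i * b i + s₁ * ∑ i, c i * d i : ℤ) : ℚ) = 2 * A₁ ∧
      ∑ i, a i * c i + m₁ * ∑ i, b i * d i = 0 ∧
      ((∑ i, a i * d i + g * ∑ i, b i * c i : ℤ) : ℚ) = 2 * g * A₃ := by
  have hr : √(m : ℝ) ^ 2 = m := Real.sq_sqrt (by positivity)
  have hw : √(s : ℝ) ^ 2 = s := Real.sq_sqrt (by positivity)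
  obtain ⟨x, hx, hsum⟩ := h
  have h1 : ∀ i, ∃ a b c d : ℤ,
      x i = (a + b * √(m : ℝ) + c * √(s : ℝ) + d / g * (√(m : ℝ) * √(s : ℝ))) / 2 ∧
      a % 2 = d % 2 ∧ b % 2 = c % 2 ∧ (n % 4 = 3 → d % 2 = 0) := by
    intro i
    obtain ⟨hxK, hxi⟩ := hx i
    obtain ⟨q₀, q₁, q₂, q₃, e⟩ := field_form hK D.not_sq_m D.not_sq_s D.not_sq_ms hmK hsK hxK
    rw [e] at hxi
    obtain ⟨a, b, c, d, ha, hb, hc, hd, hpar⟩ := D.integral_form hxi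
    refine ⟨a, b, c, d, ?_, hpar⟩
    have hg : (g : ℝ) ≠ 0 := by exact_mod_cast D.g_pos.ne'
    have ha' : 2 * (q₀ : ℝ) = a := by exact_mod_cast ha
    have hb' : 2 * (q₁ : ℝ) = b := by exact_mod_cast hb
    have hc' : 2 * (q₂ : ℝ) = c := by exact_mod_cast hc
    have hd' : 2 * (g : ℝ) * q₃ = d := by exact_mod_cast hd
    rw [e, ← ha', ← hb', ← hc', ← hd']
    field_simp
  choose a b c d hx' hpar using h1
  have hg : (g : ℚ) ≠ 0 := by exact_mod_cast D.g_pos.ne'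
  have hgR : (g : ℝ) ≠ 0 := by exact_mod_cast D.g_pos.ne'
  have em : (m : ℝ) = g * m₁ := by exact_mod_cast D.m_eq
  have es : (s : ℝ) = g * s₁ := by exact_mod_cast D.s_eq
  have en : (n : ℝ) = m₁ * s₁ := by exact_mod_cast D.n_eq
  have hsq : ∀ i, 4 * x i ^ 2 = ((a i : ℝ) ^ 2 + m * b i ^ 2 + s * c i ^ 2 + n * d i ^ 2)
      + 2 * (a i * b i + s₁ * (c i * d i)) * √(m : ℝ)
      + 2 * (a i * c i + m₁ * (b i * d i)) * √(s : ℝ)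
      + 2 * (a i * d i + g * (b i * c i)) / g * (√(m : ℝ) * √(s : ℝ)) := by
    intro i
    rw [hx']
    obtain ⟨y, hy⟩ : ∃ y : ℝ, (d i : ℝ) = g * y := ⟨d i / g, by field_simp⟩
    rw [hy]
    generalize √(m : ℝ) = R at *
    generalize √(s : ℝ) = W at *
    rw [en]
    rw [em] at hr ⊢
    rw [es] at hw ⊢
    field_simp
    linear_combination 4 * ((b i : ℝ) ^ 2 + y ^ 2 * W ^ 2 + 2 * b i * y * W) * hr
      + 4 * ((c i : ℝ) ^ 2 + y ^ 2 * g * m₁ + 2 * c i * y * R) * hw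
  obtain ⟨e0, e1, e2, e3⟩ := sqrt_indep D.not_sq_m D.not_sq_s D.not_sq_ms
    (f₀ := ((∑ i, a i ^ 2 + m * ∑ i, b i ^ 2 + s * ∑ i, c i ^ 2 + n * ∑ i, d i ^ 2 : ℤ) : ℚ)
      - 4 * A₀)
    (f₁ := 2 * ((∑ i, a i * b i + s₁ * ∑ i, c i * d i : ℤ) : ℚ) - 4 * A₁)
    (f₂ := 2 * ((∑ i, a i * c i + m₁ * ∑ i, b i * d i : ℤ) : ℚ))
    (f₃ := 2 * ((∑ i, a i * d i + g * ∑ i, b i * c i : ℤ) : ℚ) / g - 4 * A₃)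
    (by
      simp only [Fin.sum_univ_four] at hsum ⊢
      push_cast
      linear_combination -4 * hsum - hsq 0 - hsq 1 - hsq 2 - hsq 3)
  refine ⟨a, b, c, d, hpar, by linarith, by linarith, ?_, ?_⟩
  · have : ((∑ i, a i * c i + m₁ * ∑ i, b i * d i : ℤ) : ℚ) = 0 := by linarith
    exact_mod_cast this
  · field_simp at e3
    linarith

/-! ### Integer vectors and sums of two or three squares -/

theorem eq_zero_of_sum_sq {v : Fin 4 → ℤ} (h : ∑ i, v i ^ 2 ≤ 0) (i : Fin 4) : v i = 0 := by
  have h' : ∑ i, v i ^ 2 = 0 := le_antisymm h (Finset.sum_nonneg fun i _ => sq_nonneg (v i))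
  have := (Finset.sum_eq_zero_iff_of_nonneg (fun i _ => sq_nonneg (v i))).mp h' i
    (Finset.mem_univ i)
  simpa using this

/-- An integer vector of norm 1 is, up to sign, a standard basis vector. -/
theorem unit_vector {v : Fin 4 → ℤ} (h : ∑ i, v i ^ 2 = 1) :
    ∃ i, v i ^ 2 = 1 ∧ ∀ j, j ≠ i → v j = 0 := by
  obtain ⟨i, hi⟩ : ∃ i, v i ≠ 0 := by
    by_contra! h0
    simp [h0] at h
  have hsplit := Finset.add_sum_erase Finset.univ (fun i => v i ^ 2) (Finset.mem_univ i)
  rw [h] at hsplit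
  have hnn : ∀ j ∈ Finset.univ.erase i, 0 ≤ v j ^ 2 := fun j _ => sq_nonneg _
  have hrest := Finset.sum_nonneg hnn
  have hpos : 0 < v i ^ 2 := by positivity
  refine ⟨i, by linarith, fun j hj => ?_⟩
  have := (Finset.sum_eq_zero_iff_of_nonneg hnn).mp (by linarith) j
    (Finset.mem_erase.mpr ⟨hj, Finset.mem_univ j⟩)
  simpa using this

theorem three_sq_mod_eight (x y z : ℤ) : (x ^ 2 + y ^ 2 + z ^ 2) % 8 ≠ 7 := by
  intro h
  have h' : ((x ^ 2 + y ^ 2 + z ^ 2 : ℤ) : ZMod 8) = ((7 : ℤ) : ZMod 8) := by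
    rw [ZMod.intCast_eq_intCast_iff]
    exact h
  push_cast at h'
  generalize (x : ZMod 8) = X at h'
  generalize (y : ZMod 8) = Y at h'
  generalize (z : ZMod 8) = Z at h'
  revert X Y Z
  decide

theorem three_sq_ne (x y z : ℤ) :
    x ^ 2 + y ^ 2 + z ^ 2 ≠ 7 ∧ x ^ 2 + y ^ 2 + z ^ 2 ≠ 15 ∧ x ^ 2 + y ^ 2 + z ^ 2 ≠ 28 := by
  refine ⟨fun h => three_sq_mod_eight x y z (by omega),
    fun h => three_sq_mod_eight x y z (by omega), fun h => ?_⟩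
  -- modulo 4 all three are even, and dividing by 4 leads back to 7
  rcases sq_emod_four x with ⟨hx, hx'⟩ | ⟨hx, hx'⟩ <;>
  rcases sq_emod_four y with ⟨hy, hy'⟩ | ⟨hy, hy'⟩ <;>
  rcases sq_emod_four z with ⟨hz, hz'⟩ | ⟨hz, hz'⟩ <;> try omega
  obtain ⟨x', rfl⟩ : ∃ x', x = 2 * x' := ⟨x / 2, by omega⟩
  obtain ⟨y', rfl⟩ : ∃ x', y = 2 * x' := ⟨y / 2, by omega⟩
  obtain ⟨z', rfl⟩ : ∃ x', z = 2 * x' := ⟨z / 2, by omega⟩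
  have : x' ^ 2 + y' ^ 2 + z' ^ 2 = 7 := by linarith
  exact three_sq_mod_eight x' y' z' (by omega)

theorem two_sq_ne (x y : ℤ) :
    x ^ 2 + y ^ 2 ≠ 12 ∧ x ^ 2 + y ^ 2 ≠ 21 ∧ x ^ 2 + y ^ 2 ≠ 23 := by
  have h9 : (x ^ 2 + y ^ 2) % 9 ≠ 3 := by
    intro h
    have h' : ((x ^ 2 + y ^ 2 : ℤ) : ZMod 9) = ((3 : ℤ) : ZMod 9) := by
      rw [ZMod.intCast_eq_intCast_iff]
      exact h
    push_cast at h'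
    generalize (x : ZMod 9) = X at h'
    generalize (y : ZMod 9) = Y at h'
    revert X Y
    decide
  refine ⟨by omega, by omega, ?_⟩
  rcases sq_emod_four x with ⟨hx, hx'⟩ | ⟨hx, hx'⟩ <;>
  rcases sq_emod_four y with ⟨hy, hy'⟩ | ⟨hy, hy'⟩ <;> omega

/-- The substitution `b = u + v`, `c = u - v`, possible for `b ≡ c (mod 2)`. -/
theorem exists_half {b c : Fin 4 → ℤ} (h : ∀ i, b i % 2 = c i % 2) :
    ∃ u v : Fin 4 → ℤ, b = (fun i => u i + v i) ∧ c = fun i => u i - v i :=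
  ⟨fun i => (b i + c i) / 2, fun i => (b i - c i) / 2,
    by funext i; have := h i; show b i = (b i + c i) / 2 + (b i - c i) / 2; omega,
    by funext i; have := h i; show c i = (b i + c i) / 2 - (b i - c i) / 2; omega⟩

theorem exists_double {a : Fin 4 → ℤ} (h : ∀ i, a i % 2 = 0) :
    ∃ a' : Fin 4 → ℤ, a = fun i => 2 * a' i :=
  ⟨fun i => a i / 2, by funext i; have := h i; show a i = 2 * (a i / 2); omega⟩

/-- A vector with a nonzero inner product has norm at least 1. -/
theorem sum_sq_pos_of_mul {a u : Fin 4 → ℤ} (h : ∑ i, a i * u i ≠ 0) : 1 ≤ ∑ i, a i ^ 2 := by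
  by_contra! h0
  apply h
  have := eq_zero_of_sum_sq (v := a) (by omega)
  simp [this]

theorem split_one (a : Fin 4 → ℤ) (i : Fin 4) :
    ∃ x y z : ℤ, ∑ l, a l ^ 2 = a i ^ 2 + (x ^ 2 + y ^ 2 + z ^ 2) := by
  rw [Fin.sum_univ_four]
  fin_cases i
  · exact ⟨a 1, a 2, a 3, by simp; ring⟩
  · exact ⟨a 0, a 2, a 3, by simp; ring⟩
  · exact ⟨a 0, a 1, a 3, by simp; ring⟩
  · exact ⟨a 0, a 1, a 2, by simp; ring⟩

theorem split_two (a : Fin 4 → ℤ) {i j : Fin 4} (hij : i ≠ j) :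
    ∃ x y : ℤ, ∑ l, a l ^ 2 = a i ^ 2 + a j ^ 2 + (x ^ 2 + y ^ 2) := by
  obtain ⟨k, l, h⟩ : ∃ k l : Fin 4, Finset.univ.val = {i, j, k, l} := by
    revert i j; decide
  refine ⟨a k, a l, ?_⟩
  rw [Finset.sum_eq_multiset_sum, h]
  simp
  ring

/-- The elements `N + (1 + √m)²`, after the coordinates of `√n` have been shown to vanish. Since
`m > N`, the vectors `u` and `v` are unit vectors up to sign. If they are supported on the same
index, `N` is a sum of three squares; otherwise `N - 1 - k/2`, which is 12, 23 or 21, is a sum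
of two squares. -/
theorem alpha_core {m k N : ℤ} (hN : (k = 4 ∧ N = 15) ∨ (k = 8 ∧ N = 28) ∨ (k = 12 ∧ N = 28))
    (hm : N < m) {a u v : Fin 4 → ℤ} (huv : ∑ i, u i ^ 2 = ∑ i, v i ^ 2)
    (hau : ∑ i, a i * u i = 1) (hav : ∑ i, a i * v i = 1)
    (h : 4 * ∑ i, a i ^ 2 + m * ∑ i, (u i + v i) ^ 2 + (m + k) * ∑ i, (u i - v i) ^ 2
      = 4 * (N + 1 + m)) : False := by
  have hA := sum_sq_pos_of_mul (a := a) (u := u) (by omega)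
  have hU := sum_sq_pos_of_mul (a := u) (u := a) (by simp only [mul_comm (u _)]; omega)
  have hC : 0 ≤ ∑ i, (u i - v i) ^ 2 := Finset.sum_nonneg fun i _ => sq_nonneg _
  have hBC : ∑ i, (u i + v i) ^ 2 + ∑ i, (u i - v i) ^ 2 = 4 * ∑ i, u i ^ 2 := by
    have : ∑ i, (u i + v i) ^ 2 + ∑ i, (u i - v i) ^ 2 = 2 * ∑ i, u i ^ 2 + 2 * ∑ i, v i ^ 2 := by
      simp only [Fin.sum_univ_four]; ring
    omega
  have hU1 : ∑ i, u i ^ 2 = 1 := by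
    by_contra hne
    have hU2 : 2 ≤ ∑ i, u i ^ 2 := by omega
    have hkC : 0 ≤ k * ∑ i, (u i - v i) ^ 2 := mul_nonneg (by omega) hC
    have hmU : m * 2 ≤ m * ∑ i, u i ^ 2 := mul_le_mul_of_nonneg_left hU2 (by omega)
    have : 4 * ∑ i, a i ^ 2 + 4 * (m * ∑ i, u i ^ 2) + k * ∑ i, (u i - v i) ^ 2
        = 4 * (N + 1 + m) := by
      linear_combination h - m * hBC
    omega
  obtain ⟨i, hi, hi0⟩ := unit_vector hU1
  obtain ⟨j, hj, hj0⟩ := unit_vector (huv ▸ hU1)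
  rw [Finset.sum_eq_single i (by intro l _ hl; simp [hi0 l hl]) (by simp)] at hau
  rw [Finset.sum_eq_single j (by intro l _ hl; simp [hj0 l hl]) (by simp)] at hav
  have hai : a i ^ 2 = 1 := by
    have : a i ^ 2 * u i ^ 2 = 1 := by rw [← mul_pow, hau]; norm_num
    rwa [hi, mul_one] at this
  have haj : a j ^ 2 = 1 := by
    have : a j ^ 2 * v j ^ 2 = 1 := by rw [← mul_pow, hav]; norm_num
    rwa [hj, mul_one] at this
  by_cases hij : i = j
  · -- then `u = v`, so `N` is a sum of three squares
    subst hij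
    have huv' : ∀ l, u l = v l := by
      intro l
      by_cases hl : l = i
      · subst hl
        have h0 : a l ≠ 0 := by rintro h0; rw [h0] at hai; norm_num at hai
        exact mul_left_cancel₀ h0 (hau.trans hav.symm)
      · rw [hi0 l hl, hj0 l hl]
    have hC0 : ∑ l, (u l - v l) ^ 2 = 0 := by simp [huv']
    have hB : ∑ l, (u l + v l) ^ 2 = 4 := by omega
    obtain ⟨x, y, z, hxyz⟩ := split_one a i
    obtain ⟨-, h15, h28⟩ := three_sq_ne x y z
    rw [hC0, hB] at h
    omega
  · -- then `N - 1 - k / 2` is a sum of two squares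
    have huv0 : ∑ l, u l * v l = 0 := by
      apply Finset.sum_eq_zero
      intro l _
      by_cases hl : l = i
      · rw [hj0 l (hl ▸ hij), mul_zero]
      · rw [hi0 l hl, zero_mul]
    have hC0 : ∑ l, (u l - v l) ^ 2 = 2 := by
      have : ∑ l, (u l - v l) ^ 2
          = ∑ l, u l ^ 2 + ∑ l, v l ^ 2 - 2 * ∑ l, u l * v l := by
        simp only [Fin.sum_univ_four]; ring
      omega
    have hB : ∑ l, (u l + v l) ^ 2 = 2 := by omega
    obtain ⟨x, y, hxy⟩ := split_two a hij
    obtain ⟨h12, h21, h23⟩ := two_sq_ne x y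
    rw [hC0, hB] at h
    omega

/-- The elements `7 + ((√m + √s)/2)²`, after the coordinates of `√n` have been shown to vanish.
Here `v = 0` and `u` is a unit vector up to sign, so 7 would be a sum of three squares. -/
theorem exceptional_core {m k : ℤ} (hm : 8 ≤ m) (hk : 0 ≤ k) {a u v : Fin 4 → ℤ}
    (huv : ∑ i, u i ^ 2 - ∑ i, v i ^ 2 = 1) (hau : ∑ i, a i * u i = 0)
    (h : 4 * ∑ i, a i ^ 2 + m * ∑ i, (u i + v i) ^ 2 + (m + k) * ∑ i, (u i - v i) ^ 2
      = 28 + m + (m + k)) : False := by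
  have hA : 0 ≤ ∑ i, a i ^ 2 := Finset.sum_nonneg fun i _ => sq_nonneg _
  have hV : 0 ≤ ∑ i, v i ^ 2 := Finset.sum_nonneg fun i _ => sq_nonneg _
  have hC : 1 ≤ ∑ i, (u i - v i) ^ 2 := by
    apply sum_sq_pos_of_mul (u := fun i => u i + v i)
    have : ∑ i, (u i - v i) * (u i + v i) = ∑ i, u i ^ 2 - ∑ i, v i ^ 2 := by
      simp only [Fin.sum_univ_four]; ring
    omega
  have hBC : ∑ i, (u i + v i) ^ 2 + ∑ i, (u i - v i) ^ 2 = 4 * ∑ i, v i ^ 2 + 2 := by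
    have : ∑ i, (u i + v i) ^ 2 + ∑ i, (u i - v i) ^ 2 = 2 * ∑ i, u i ^ 2 + 2 * ∑ i, v i ^ 2 := by
      simp only [Fin.sum_univ_four]; ring
    omega
  have h' : 4 * ∑ i, a i ^ 2 + 4 * (m * ∑ i, v i ^ 2) + k * ∑ i, (u i - v i) ^ 2 = 28 + k := by
    linear_combination h - m * hBC
  have hV0 : ∑ i, v i ^ 2 = 0 := by
    by_contra hne
    have hkC : k * 1 ≤ k * ∑ i, (u i - v i) ^ 2 := mul_le_mul_of_nonneg_left hC hk
    have hmV : m * 1 ≤ m * ∑ i, v i ^ 2 := mul_le_mul_of_nonneg_left (by omega) (by omega)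
    omega
  have hU : ∑ i, u i ^ 2 = 1 := by omega
  have hv := eq_zero_of_sum_sq hV0.le
  obtain ⟨i, hi, hi0⟩ := unit_vector hU
  rw [Finset.sum_eq_single i (by intro l _ hl; simp [hi0 l hl]) (by simp)] at hau
  have hai : a i = 0 := by
    rcases mul_eq_zero.mp hau with h0 | h0
    · exact h0
    · rw [h0] at hi; norm_num at hi
  simp only [hv, sub_zero] at h'
  obtain ⟨x, y, z, hxyz⟩ := split_one a i
  rw [hai] at hxyz
  have h7 := (three_sq_ne x y z).1
  simp only [hU] at h'
  norm_num at h' hxyz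
  omega

/-! ### Elements that are not sums of four squares -/

/-- If `n` (or `4n` when `n ≡ 3 (mod 4)`, where the coordinates are even) exceeds
`T`, four times the rational part, then the coordinates of `√n` vanish. -/
theorem d_zero {n : ℕ} {T : ℤ} (hn : T < n ∨ (n % 4 = 3 ∧ T < 4 * n)) {d : Fin 4 → ℤ}
    (hpar : n % 4 = 3 → ∀ i, d i % 2 = 0) (h : n * ∑ i, d i ^ 2 ≤ T) (i : Fin 4) : d i = 0 := by
  rcases hn with hn | ⟨hn3, hn⟩
  · apply eq_zero_of_sum_sq
    by_contra! h1
    nlinarith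
  · obtain ⟨d', rfl⟩ := exists_double (hpar hn3)
    have : d' i = 0 := by
      apply eq_zero_of_sum_sq
      by_contra! h1
      have e : ∑ i, (2 * d' i) ^ 2 = 4 * ∑ i, d' i ^ 2 := by
        simp only [Fin.sum_univ_four]; ring
      rw [e] at h
      nlinarith
    simp [this]

theorem FieldData.not_four_exceptional {K : IntermediateField ℚ ℝ} (hK : IsBiquadratic K)
    {m s g m₁ s₁ n : ℕ} (D : FieldData m s g m₁ s₁ n)
    (hmK : √(m : ℝ) ∈ K) (hsK : √(s : ℝ) ∈ K) (hm : 8 ≤ m) (hms : m ≤ s)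
    (hn : 28 + m + s < n ∨ (n % 4 = 3 ∧ 28 + m + s < 4 * n)) :
    ¬ SumOfNSquaresIn (ringOfInt K) 4 (7 + ((√(m : ℝ) + √(s : ℝ)) / 2) ^ 2) := by
  intro h
  have hr : √(m : ℝ) ^ 2 = m := Real.sq_sqrt (by positivity)
  have hw : √(s : ℝ) ^ 2 = s := Real.sq_sqrt (by positivity)
  obtain ⟨a, b, c, d, hpar, e0, e1, e2, e3⟩ := D.four_squares hK hmK hsK
    (A₀ := 7 + (m + s) / 4) (A₁ := 0) (A₃ := 1 / 2) (by
      refine (congrArg (SumOfNSquaresIn (ringOfInt K) 4) ?_).mp h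
      push_cast
      linear_combination (1 / 4) * hr + (1 / 4) * hw)
  have e0' : ∑ i, a i ^ 2 + m * ∑ i, b i ^ 2 + s * ∑ i, c i ^ 2 + n * ∑ i, d i ^ 2
      = 28 + m + (s : ℤ) := by
    have := e0.trans (show _ = ((28 + m + s : ℤ) : ℚ) by push_cast; ring)
    exact_mod_cast this
  have e1' : ∑ i, a i * b i + s₁ * ∑ i, c i * d i = 0 := by
    have := e1.trans (show _ = ((0 : ℤ) : ℚ) by simp)
    exact_mod_cast this
  have e3' : ∑ i, a i * d i + g * ∑ i, b i * c i = (g : ℤ) := by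
    have := e3.trans (show _ = ((g : ℤ) : ℚ) by push_cast; ring)
    exact_mod_cast this
  have hA : 0 ≤ ∑ i, a i ^ 2 := Finset.sum_nonneg fun i _ => sq_nonneg _
  have hB : 0 ≤ (m : ℤ) * ∑ i, b i ^ 2 := by positivity
  have hC : 0 ≤ (s : ℤ) * ∑ i, c i ^ 2 := by positivity
  have hd := d_zero (n := n) (T := 28 + m + s) (d := d) (by omega)
    (fun h3 i => (hpar i).2.2 h3) (by linarith)
  simp only [hd] at hpar e0' e1' e2 e3'
  obtain ⟨a', rfl⟩ := exists_double (a := a) (fun i => (hpar i).1)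
  obtain ⟨u, v, rfl, rfl⟩ := exists_half (fun i => (hpar i).2.1)
  have hg : (g : ℤ) ≠ 0 := by exact_mod_cast D.g_pos.ne'
  obtain ⟨k, hk⟩ : ∃ k : ℤ, (s : ℤ) = m + k := ⟨s - m, by ring⟩
  refine exceptional_core (m := m) (k := k) (a := a') (u := u) (v := v) (by omega) (by omega)
    ?_ ?_ ?_
  · apply mul_left_cancel₀ hg
    simp only [Fin.sum_univ_four] at e3' ⊢
    linear_combination e3'
  · simp only [Fin.sum_univ_four] at e1' e2 ⊢
    linarith
  · rw [← hk, ← e0']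
    simp only [Fin.sum_univ_four]
    ring

theorem FieldData.not_four_alpha {K : IntermediateField ℚ ℝ} (hK : IsBiquadratic K)
    {m s g m₁ s₁ n : ℕ} (D : FieldData m s g m₁ s₁ n)
    (hmK : √(m : ℝ) ∈ K) (hsK : √(s : ℝ) ∈ K) {k N : ℕ}
    (hN : (k = 4 ∧ N = 15) ∨ (k = 8 ∧ N = 28) ∨ (k = 12 ∧ N = 28)) (hs : s = m + k) (hm : N < m)
    (hn : 4 * (N + 1 + m) < n ∨ (n % 4 = 3 ∧ 4 * (N + 1 + m) < 4 * n) ∨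
      (m = 39 ∧ s = 51 ∧ n = 221) ∨ (m = 30 ∧ s = 42 ∧ n = 35 ∧ g = 6)) :
    ¬ SumOfNSquaresIn (ringOfInt K) 4 (N + (1 + √(m : ℝ)) ^ 2) := by
  intro h
  have hr : √(m : ℝ) ^ 2 = m := Real.sq_sqrt (by positivity)
  obtain ⟨a, b, c, d, hpar, e0, e1, e2, e3⟩ := D.four_squares hK hmK hsK
    (A₀ := N + 1 + m) (A₁ := 2) (A₃ := 0) (by
      refine (congrArg (SumOfNSquaresIn (ringOfInt K) 4) ?_).mp h
      push_cast
      linear_combination hr)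
  have e0' : ∑ i, a i ^ 2 + m * ∑ i, b i ^ 2 + s * ∑ i, c i ^ 2 + n * ∑ i, d i ^ 2
      = 4 * (N + 1 + m : ℤ) := by
    have := e0.trans (show _ = ((4 * (N + 1 + m) : ℤ) : ℚ) by push_cast; ring)
    exact_mod_cast this
  have e1' : ∑ i, a i * b i + s₁ * ∑ i, c i * d i = 4 := by
    have := e1.trans (show _ = ((4 : ℤ) : ℚ) by norm_num)
    exact_mod_cast this
  have e3' : ∑ i, a i * d i + g * ∑ i, b i * c i = 0 := by
    have := e3.trans (show _ = ((0 : ℤ) : ℚ) by simp)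
    exact_mod_cast this
  have hA : 0 ≤ ∑ i, a i ^ 2 := Finset.sum_nonneg fun i _ => sq_nonneg _
  have hB : 0 ≤ ∑ i, b i ^ 2 := Finset.sum_nonneg fun i _ => sq_nonneg _
  have hC : 0 ≤ ∑ i, c i ^ 2 := Finset.sum_nonneg fun i _ => sq_nonneg _
  have hmB : 0 ≤ (m : ℤ) * ∑ i, b i ^ 2 := by positivity
  have hsC : 0 ≤ (s : ℤ) * ∑ i, c i ^ 2 := by positivity
  have hD : 0 ≤ ∑ i, d i ^ 2 := Finset.sum_nonneg fun i _ => sq_nonneg _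
  by_cases hd : ∀ i, d i = 0
  · simp only [hd] at hpar e0' e1' e2 e3'
    obtain ⟨a', rfl⟩ := exists_double (a := a) (fun i => (hpar i).1)
    obtain ⟨u, v, rfl, rfl⟩ := exists_half (fun i => (hpar i).2.1)
    have hg : (g : ℤ) ≠ 0 := by exact_mod_cast D.g_pos.ne'
    refine alpha_core (m := m) (k := k) (N := N) (a := a') (u := u) (v := v) (by omega) (by omega)
      ?_ ?_ ?_ ?_
    · apply mul_left_cancel₀ hg
      simp only [Fin.sum_univ_four] at e3' ⊢
      linear_combination e3'
    · simp only [Fin.sum_univ_four] at e1' e2 ⊢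
      linarith
    · simp only [Fin.sum_univ_four] at e1' e2 ⊢
      linarith
    · rw [← e0', hs]
      push_cast
      simp only [Fin.sum_univ_four]
      ring
  -- If `d ≠ 0`, only the fields of `(39, 51)` and `(30, 42)` survive the size bound. In them the
  -- rational part leaves no room for `b` and `c`, since `|b|² + |c|²` is positive and even,
  -- respectively a positive multiple of 4 (as `b·c` is even); but `b = c = 0` contradicts the
  -- coefficient of `√m`.
  have hD1 : 1 ≤ ∑ i, d i ^ 2 := by
    by_contra! h0
    exact hd (eq_zero_of_sum_sq (by omega))
  have hbc0 : ∑ i, b i ^ 2 + ∑ i, c i ^ 2 ≤ 0 → False := by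
    intro h0
    have hb := eq_zero_of_sum_sq (v := b) (by omega)
    have hc := eq_zero_of_sum_sq (v := c) (by omega)
    simp [hb, hc] at e1'
  obtain ⟨V, hV⟩ : ∃ V : ℤ, ∑ i, b i ^ 2 + ∑ i, c i ^ 2 - 2 * ∑ i, b i * c i = 4 * V := by
    obtain ⟨u, v, rfl, rfl⟩ := exists_half (fun i => (hpar i).2.1)
    exact ⟨∑ i, v i ^ 2, by simp only [Fin.sum_univ_four]; ring⟩
  have hcs : 2 * ∑ i, b i * c i ≤ ∑ i, b i ^ 2 + ∑ i, c i ^ 2 ∧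
      -(2 * ∑ i, b i * c i) ≤ ∑ i, b i ^ 2 + ∑ i, c i ^ 2 := by
    have h1 : 0 ≤ ∑ i, (b i + c i) ^ 2 := Finset.sum_nonneg fun i _ => sq_nonneg _
    have h2 : 0 ≤ ∑ i, (b i - c i) ^ 2 := Finset.sum_nonneg fun i _ => sq_nonneg _
    simp only [Fin.sum_univ_four] at h1 h2 ⊢
    constructor <;> linarith
  obtain ⟨hcs1, hcs2⟩ := hcs
  have hbc1 : 1 ≤ ∑ i, b i ^ 2 + ∑ i, c i ^ 2 := by
    by_contra! h0
    exact hbc0 (by omega)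
  rcases hn with hn | hn | ⟨rfl, rfl, rfl⟩ | ⟨rfl, rfl, rfl, rfl⟩
  · exact hd (d_zero (n := n) (T := 4 * (N + 1 + m)) (by omega)
      (fun h3 i => (hpar i).2.2 h3) (by linarith))
  · exact hd (d_zero (n := n) (T := 4 * (N + 1 + m)) (by omega)
      (fun h3 i => (hpar i).2.2 h3) (by linarith))
  · obtain rfl : N = 28 := by omega
    push_cast at e0'
    omega
  · obtain rfl : N = 28 := by omega
    have hd2 : ∀ i, d i % 2 = 0 := fun i => (hpar i).2.2 rfl
    obtain ⟨a', rfl⟩ := exists_double (a := a) (fun i => (hpar i).1.trans (hd2 i))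
    obtain ⟨d', rfl⟩ := exists_double hd2
    beta_reduce at *
    have ed : ∑ i, (2 * d' i) ^ 2 = 4 * ∑ i, d' i ^ 2 := by simp only [Fin.sum_univ_four]; ring
    have ead : ∑ i, 2 * a' i * (2 * d' i) = 4 * ∑ i, a' i * d' i := by
      simp only [Fin.sum_univ_four]; ring
    rw [ed] at e0' hD1
    rw [ead] at e3'
    push_cast at e0' e3'
    omega

/-- The pairs of the theorem give a `FieldData` with `g = gcd(m, s)`, and `g` divides `s - m`, hence
is a squarefree divisor of 4, 8 or 12. -/
theorem exists_data {m s : ℕ} (hm : Squarefree m) (hs : Squarefree s) (h1m : 1 < m)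
    (hm4 : m % 4 ≠ 1) (hsc : s = m + 4 ∨ s = m + 8 ∨ s = m + 12) :
    FieldData m s (m.gcd s) (m / m.gcd s) (s / m.gcd s) (m / m.gcd s * (s / m.gcd s)) ∧
      (m.gcd s = 1 ∨ m.gcd s = 2 ∨ m.gcd s = 3 ∨ m.gcd s = 6) := by
  have hm0 : m % 4 ≠ 0 := by
    intro h
    have := hm 2 (by omega)
    simp at this
  have hg0 : 0 < m.gcd s := Nat.gcd_pos_of_pos_left _ (by omega)
  have e1 := Nat.mul_div_cancel' (Nat.gcd_dvd_left m s)
  have e2 := Nat.mul_div_cancel' (Nat.gcd_dvd_right m s)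
  have hcop := Nat.coprime_div_gcd_div_gcd hg0
  have hdvd : m.gcd s ∣ s - m := Nat.dvd_sub (Nat.gcd_dvd_right m s) (Nat.gcd_dvd_left m s)
  have h2 : m % 4 = 2 → m.gcd s % 2 = 0 := by
    intro h
    have := Nat.dvd_gcd (show 2 ∣ m by omega) (show 2 ∣ s by omega)
    omega
  generalize m.gcd s = g at *
  generalize m / g = m₁ at *
  generalize s / g = s₁ at *
  have hm₁ : m₁ % 2 = 1 := by
    by_contra h
    obtain ⟨j, rfl⟩ : ∃ j, m₁ = 2 * j := ⟨m₁ / 2, by omega⟩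
    have e : m = 2 * (g * j) := by rw [← e1]; ring
    obtain ⟨l, rfl⟩ : ∃ l, g = 2 * l := ⟨g / 2, by have := h2 (by omega); omega⟩
    have e' : m = 4 * (l * j) := by rw [e]; ring
    omega
  have hs₁ : s₁ % 2 = 1 := by
    by_contra h
    obtain ⟨j, rfl⟩ : ∃ j, s₁ = 2 * j := ⟨s₁ / 2, by omega⟩
    have e : s = 2 * (g * j) := by rw [← e2]; ring
    obtain ⟨l, rfl⟩ : ∃ l, g = 2 * l := ⟨g / 2, by have := h2 (by omega); omega⟩
    have e' : s = 4 * (l * j) := by rw [e]; ring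
    omega
  have hg4 : g % 4 ≠ 0 := by
    intro h
    obtain ⟨j, rfl⟩ : ∃ j, g = 4 * j := ⟨g / 4, by omega⟩
    have e' : m = 4 * (j * m₁) := by rw [← e1]; ring
    omega
  have hn_odd : m₁ * s₁ % 2 = 1 := by rw [Nat.mul_mod, hm₁, hs₁]
  constructor
  · refine ⟨e1.symm, e2.symm, rfl, hm, hs, ?_, h1m, by omega, ?_, by omega, by omega, hs₁,
      hn_odd, ?_⟩
    · rw [Nat.squarefree_mul hcop]
      exact ⟨hm.squarefree_of_dvd ⟨g, by rw [← e1]; ring⟩,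
        hs.squarefree_of_dvd ⟨g, by rw [← e2]; ring⟩⟩
    · by_contra hle
      have h1 : m₁ * s₁ = 1 := by omega
      obtain ⟨rfl, rfl⟩ := mul_eq_one.mp h1
      omega
    · intro h3
      have hm' : (g % 4 * (m₁ % 4)) % 4 = 3 := by rw [← Nat.mul_mod, e1, h3]
      have hs' : (g % 4 * (s₁ % 4)) % 4 = 3 := by rw [← Nat.mul_mod, e2]; omega
      rw [Nat.mul_mod]
      have h4 : g % 4 < 4 := Nat.mod_lt _ (by norm_num)
      have h5 : m₁ % 4 < 4 := Nat.mod_lt _ (by norm_num)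
      have h6 : s₁ % 4 < 4 := Nat.mod_lt _ (by norm_num)
      generalize g % 4 = x at *
      generalize m₁ % 4 = y at *
      generalize s₁ % 4 = z at *
      interval_cases x <;> interval_cases y <;> omega
  · have hle : g ≤ 12 := (Nat.le_of_dvd (by omega) hdvd).trans (by omega)
    rcases hsc with rfl | rfl | rfl <;> rw [Nat.add_sub_cancel_left] at hdvd <;>
      interval_cases g <;> omega

/-! ### Representations by five squares and the size of the third radicand -/

theorem ringOfInt_add {K : IntermediateField ℚ ℝ} {x y : ℝ} (hx : x ∈ ringOfInt K)
    (hy : y ∈ ringOfInt K) : x + y ∈ ringOfInt K :=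
  ⟨add_mem hx.1 hy.1, hx.2.add hy.2⟩

theorem ringOfInt_natCast {K : IntermediateField ℚ ℝ} (k : ℕ) : (k : ℝ) ∈ ringOfInt K :=
  ⟨natCast_mem K k, by simpa using isIntegral_algebraMap (R := ℤ) (A := ℝ) (x := (k : ℤ))⟩

theorem ringOfInt_sqrt {K : IntermediateField ℚ ℝ} {k : ℕ} (h : √(k : ℝ) ∈ K) :
    √(k : ℝ) ∈ ringOfInt K := by
  refine ⟨h, IsIntegral.of_pow (n := 2) (by norm_num) ?_⟩
  rw [Real.sq_sqrt (by positivity)]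
  exact (ringOfInt_natCast (K := K) k).2

theorem mem_of_sumOfNSquares {K : IntermediateField ℚ ℝ} {k : ℕ} {α : ℝ}
    (h : SumOfNSquaresIn (ringOfInt K) k α) : α ∈ ringOfInt K := by
  obtain ⟨x, hx, rfl⟩ := h
  exact ⟨sum_mem fun i _ => pow_mem (hx i).1 2, IsIntegral.sum _ fun i _ => (hx i).2.pow 2⟩

/-- Adding a square to a natural number written as a sum of four squares. -/
theorem sum_five {K : IntermediateField ℚ ℝ} (a b c d : ℕ) {x : ℝ} (hx : x ∈ ringOfInt K) :
    SumOfNSquaresIn (ringOfInt K) 5 ((a ^ 2 + b ^ 2 + c ^ 2 + d ^ 2 : ℕ) + x ^ 2) := by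
  refine ⟨![a, b, c, d, x], ?_, ?_⟩
  · intro i
    fin_cases i
    · exact ringOfInt_natCast a
    · exact ringOfInt_natCast b
    · exact ringOfInt_natCast c
    · exact ringOfInt_natCast d
    · exact hx
  · simp [Fin.sum_univ_five]

theorem half_sum_mem {K : IntermediateField ℚ ℝ} {m s : ℕ} (hmK : √(m : ℝ) ∈ K)
    (hsK : √(s : ℝ) ∈ K) {k : ℕ} (hs : s = m + 4 * k) :
    (√(m : ℝ) + √(s : ℝ)) / 2 ∈ ringOfInt K := by
  have hr : √(m : ℝ) ^ 2 = m := Real.sq_sqrt (by positivity)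
  have hw : √(s : ℝ) ^ 2 = s := Real.sq_sqrt (by positivity)
  refine ⟨div_mem (add_mem hmK hsK) (by exact_mod_cast natCast_mem K 2), ?_⟩
  -- the element satisfies `y⁴ - (m + 2k) y² + k² = 0`, a quadratic equation for its square
  refine IsIntegral.of_pow (n := 2) (by norm_num) ?_
  refine ⟨Polynomial.X ^ 2 - Polynomial.C ((m + 2 * k : ℕ) : ℤ) * Polynomial.X
    + Polynomial.C ((k ^ 2 : ℕ) : ℤ), ?_, ?_⟩
  · monicity!
  · simp only [Polynomial.eval₂_add, Polynomial.eval₂_sub, Polynomial.eval₂_mul,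
      Polynomial.eval₂_pow, Polynomial.eval₂_X, Polynomial.eval₂_C]
    have hs' : (s : ℝ) = m + 4 * k := by exact_mod_cast hs
    push_cast
    simp only [map_ofNat]
    generalize √(m : ℝ) = R at *
    generalize √(s : ℝ) = W at *
    have hk : (k : ℝ) = (W ^ 2 - R ^ 2) / 4 := by rw [hw, hr, hs']; ring
    rw [hk, ← hr]
    ring

/-- Outside the small exceptional pairs `n` is large enough for `d_zero` to apply to the rational
part `N + 1 + m`, save for `(39, 51)` and `(30, 42)`. -/
theorem bound_nonexceptional {m s g m₁ s₁ n : ℕ} (D : FieldData m s g m₁ s₁ n)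
    (hg : g = 1 ∨ g = 2 ∨ g = 3 ∨ g = 6) {k N : ℕ}
    (hN : (k = 4 ∧ N = 15) ∨ (k = 8 ∧ N = 28) ∨ (k = 12 ∧ N = 28)) (hs : s = m + k) (hm : N < m)
    (hs9 : s % 9 ≠ 0) (hm30 : N = 28 → 30 ≤ m) :
    4 * (N + 1 + m) < n ∨ (n % 4 = 3 ∧ 4 * (N + 1 + m) < 4 * n) ∨
      (m = 39 ∧ s = 51 ∧ n = 221) ∨ (m = 30 ∧ s = 42 ∧ n = 35 ∧ g = 6) := by
  have e1 := D.m_eq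
  have e2 := D.s_eq
  have e3 := D.n_eq
  have h4 := D.mod_m
  have hs1 := D.s₁_odd
  -- `m₁ (m₁ + j) ≡ 3 (mod 4)` for odd `m₁` and `j ≡ 2 (mod 4)`
  have mod_three : ∀ j, j % 4 = 2 → s₁ = m₁ + j → n % 4 = 3 := by
    intro j hj hj'
    have : m₁ % 4 = 1 ∧ s₁ % 4 = 3 ∨ m₁ % 4 = 3 ∧ s₁ % 4 = 1 := by omega
    rw [e3, Nat.mul_mod]
    rcases this with ⟨h, h'⟩ | ⟨h, h'⟩ <;> rw [h, h']
  rcases hg with rfl | rfl | rfl | rfl <;> rcases hN with ⟨rfl, rfl⟩ | ⟨rfl, rfl⟩ | ⟨rfl, rfl⟩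
  · left; obtain rfl : s₁ = m₁ + 4 := by omega
    nlinarith
  · left; obtain rfl : s₁ = m₁ + 8 := by omega
    nlinarith
  · left; obtain rfl : s₁ = m₁ + 12 := by omega
    nlinarith
  · right; left; refine ⟨mod_three 2 rfl (by omega), ?_⟩
    obtain rfl : s₁ = m₁ + 2 := by omega
    nlinarith
  · left; obtain rfl : s₁ = m₁ + 4 := by omega
    have : 15 ≤ m₁ := by omega
    nlinarith
  · right; left; refine ⟨mod_three 6 rfl (by omega), ?_⟩
    obtain rfl : s₁ = m₁ + 6 := by omega
    nlinarith
  · omega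
  · omega
  · obtain rfl : s₁ = m₁ + 4 := by omega
    by_cases h : 16 ≤ m₁
    · left; nlinarith
    · obtain rfl : m₁ = 13 := by omega
      right; right; left; omega
  · omega
  · omega
  · have hmod := mod_three 2 rfl (by omega)
    obtain rfl : s₁ = m₁ + 2 := by omega
    by_cases h : 8 ≤ m₁
    · right; left; refine ⟨hmod, ?_⟩; nlinarith
    · obtain rfl : m₁ = 5 := by omega
      right; right; right; omega

theorem bound_exceptional {m s : ℕ} (hex : (m, s) ∈ ({(10,14), (11,15), (15,19), (14,22), (22,30),
        (26,34), (11,19), (15,23), (23,31), (10,22), (14,26), (22,34), (26,38), (11,23), (19,31),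
        (23,35)} : Set (ℕ × ℕ))) :
    8 ≤ m ∧ (28 + m + s < m / m.gcd s * (s / m.gcd s) ∨
      ((m / m.gcd s * (s / m.gcd s)) % 4 = 3 ∧
        28 + m + s < 4 * (m / m.gcd s * (s / m.gcd s)))) := by
  simp only [Set.mem_insert_iff, Set.mem_singleton_iff, Prod.mk.injEq] at hex
  rcases hex with ⟨rfl, rfl⟩ | ⟨rfl, rfl⟩ | ⟨rfl, rfl⟩ | ⟨rfl, rfl⟩ | ⟨rfl, rfl⟩ | ⟨rfl, rfl⟩ |
    ⟨rfl, rfl⟩ | ⟨rfl, rfl⟩ | ⟨rfl, rfl⟩ | ⟨rfl, rfl⟩ | ⟨rfl, rfl⟩ | ⟨rfl, rfl⟩ | ⟨rfl, rfl⟩ |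
    ⟨rfl, rfl⟩ | ⟨rfl, rfl⟩ | ⟨rfl, rfl⟩ <;> decide

theorem lower_bound_nonexceptional {m s : ℕ} (hex : (m, s) ∉ ({(10,14), (11,15), (15,19), (14,22),
        (22,30), (26,34), (11,19), (15,23), (23,31), (10,22), (14,26), (22,34), (26,38), (11,23),
        (19,31), (23,35)} : Set (ℕ × ℕ)))
    (h1m : 1 < m) (hm4 : m % 4 ≠ 1) (hmS : m ∉ ({2, 3, 6, 7} : Set ℕ)) (hm9 : m % 9 ≠ 0)
    (hs4 : s % 4 ≠ 0) (hs9 : s % 9 ≠ 0)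
    (hsc : s = m + 4 ∨ s = m + 8 ∨ s = m + 12) :
    15 < m ∧ (s ≠ m + 4 → 30 ≤ m) := by
  simp only [Set.mem_insert_iff, Set.mem_singleton_iff, Prod.mk.injEq, not_or] at hex hmS
  by_cases h : 30 ≤ m
  · exact ⟨by omega, fun _ => h⟩
  · rcases hsc with rfl | rfl | rfl <;> interval_cases m <;> simp_all

/-- Let `K` be a totally real biquadratic field with `1 < m < s < t`
the three squarefree integers whose square roots lie in `K`. Suppose `m ≢ 1 (mod 4)`,
`m ∉ {2, 3, 6, 7}` and `s ∈ {m+4, m+8, m+12}`. Then `P(O_K) ≥ 5`; moreover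
`α = 15 + (1+√m)²` (if `s = m+4`) resp. `α = 28 + (1+√m)²` (if `s = m+8` or `m+12`)
has length exactly `5`, except for `16` exceptional pairs `(m,s)`, where instead
`7 + ((√m+√s)/2)²` has length exactly `5`. -/
theorem length_five_element_exceptional_families
    (K : IntermediateField ℚ ℝ) (hK : IsBiquadratic K)
    (m s t : ℕ) (hm : Squarefree m) (hs : Squarefree s) (ht : Squarefree t)
    (h1m : 1 < m) (hms : m < s) (hst : s < t)
    (hmK : Real.sqrt m ∈ K) (hsK : Real.sqrt s ∈ K) (htK : Real.sqrt t ∈ K)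
    (hm4 : m % 4 ≠ 1) (hmS : m ∉ ({2, 3, 6, 7} : Set ℕ))
    (hsc : s = m + 4 ∨ s = m + 8 ∨ s = m + 12) :
    (∃ α ∈ ringOfInt K, IsSumOfSquaresIn (ringOfInt K) α ∧
      ¬ SumOfNSquaresIn (ringOfInt K) 4 α) ∧
    ((m, s) ∉ ({(10,14), (11,15), (15,19), (14,22), (22,30), (26,34), (11,19), (15,23),
        (23,31), (10,22), (14,26), (22,34), (26,38), (11,23), (19,31), (23,35)} :
        Set (ℕ × ℕ)) →
      SumOfNSquaresIn (ringOfInt K) 5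
        ((if s = m + 4 then 15 else 28) + (1 + Real.sqrt m) ^ 2) ∧
      ¬ SumOfNSquaresIn (ringOfInt K) 4
        ((if s = m + 4 then 15 else 28) + (1 + Real.sqrt m) ^ 2)) ∧
    ((m, s) ∈ ({(10,14), (11,15), (15,19), (14,22), (22,30), (26,34), (11,19), (15,23),
        (23,31), (10,22), (14,26), (22,34), (26,38), (11,23), (19,31), (23,35)} :
        Set (ℕ × ℕ)) →
      SumOfNSquaresIn (ringOfInt K) 5
        (7 + ((Real.sqrt m + Real.sqrt s) / 2) ^ 2) ∧
      ¬ SumOfNSquaresIn (ringOfInt K) 4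
        (7 + ((Real.sqrt m + Real.sqrt s) / 2) ^ 2)) := by
  have hs9 : s % 9 ≠ 0 := by
    intro h
    have := hs 3 (by omega)
    simp at this
  have hs4 : s % 4 ≠ 0 := by
    intro h
    have := hs 2 (by omega)
    simp at this
  have hm9 : m % 9 ≠ 0 := by
    intro h
    have := hm 3 (by omega)
    simp at this
  obtain ⟨D, hg⟩ := exists_data hm hs h1m hm4 hsc
  have part2 : (m, s) ∉ ({(10,14), (11,15), (15,19), (14,22), (22,30), (26,34), (11,19), (15,23),
        (23,31), (10,22), (14,26), (22,34), (26,38), (11,23), (19,31), (23,35)} :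
        Set (ℕ × ℕ)) →
      SumOfNSquaresIn (ringOfInt K) 5
        ((if s = m + 4 then 15 else 28) + (1 + Real.sqrt m) ^ 2) ∧
      ¬ SumOfNSquaresIn (ringOfInt K) 4
        ((if s = m + 4 then 15 else 28) + (1 + Real.sqrt m) ^ 2) := by
    intro hex
    obtain ⟨hm15, hm30⟩ := lower_bound_nonexceptional hex h1m hm4 hmS hm9 hs4 hs9 hsc
    clear hex
    have hx : 1 + √(m : ℝ) ∈ ringOfInt K :=
      ringOfInt_add (by simpa using ringOfInt_natCast (K := K) 1) (ringOfInt_sqrt hmK)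
    by_cases h4 : s = m + 4
    · rw [if_pos h4]
      constructor
      · have := sum_five 3 2 1 1 hx
        norm_num at this
        exact this
      · have hN : (4 = 4 ∧ 15 = 15) ∨ (4 = 8 ∧ 15 = 28) ∨ (4 = 12 ∧ 15 = 28) := by omega
        have := D.not_four_alpha hK hmK hsK hN h4 hm15
          (bound_nonexceptional D hg hN h4 hm15 hs9 (by omega))
        exact_mod_cast this
    · rw [if_neg h4]
      constructor
      · have := sum_five 5 1 1 1 hx
        norm_num at this
        exact this
      · have hm30 := hm30 h4
        obtain ⟨k, hk, hsk⟩ : ∃ k, (k = 8 ∨ k = 12) ∧ s = m + k := by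
          rcases hsc with h | h | h
          · exact absurd h h4
          · exact ⟨8, by simp, h⟩
          · exact ⟨12, by simp, h⟩
        have hN : (k = 4 ∧ 28 = 15) ∨ (k = 8 ∧ 28 = 28) ∨ (k = 12 ∧ 28 = 28) := by omega
        have := D.not_four_alpha hK hmK hsK hN hsk (by omega)
          (bound_nonexceptional D hg hN hsk (by omega) hs9 (by omega))
        exact_mod_cast this
  have part3 : (m, s) ∈ ({(10,14), (11,15), (15,19), (14,22), (22,30), (26,34), (11,19), (15,23),
        (23,31), (10,22), (14,26), (22,34), (26,38), (11,23), (19,31), (23,35)} :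
        Set (ℕ × ℕ)) →
      SumOfNSquaresIn (ringOfInt K) 5
        (7 + ((Real.sqrt m + Real.sqrt s) / 2) ^ 2) ∧
      ¬ SumOfNSquaresIn (ringOfInt K) 4
        (7 + ((Real.sqrt m + Real.sqrt s) / 2) ^ 2) := by
    intro hex
    obtain ⟨hm8, hn⟩ := bound_exceptional hex
    constructor
    · obtain ⟨k, hk⟩ : ∃ k, s = m + 4 * k := by
        rcases hsc with h | h | h
        · exact ⟨1, h⟩
        · exact ⟨2, h⟩
        · exact ⟨3, h⟩
      have := sum_five 2 1 1 1 (half_sum_mem hmK hsK hk)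
      norm_num at this
      exact this
    · exact D.not_four_exceptional hK hmK hsK hm8 hms.le hn
  refine ⟨?_, part2, part3⟩
  by_cases hex : (m, s) ∈ ({(10,14), (11,15), (15,19), (14,22), (22,30), (26,34), (11,19), (15,23),
        (23,31), (10,22), (14,26), (22,34), (26,38), (11,23), (19,31), (23,35)} :
        Set (ℕ × ℕ))
  · obtain ⟨h5, h4⟩ := part3 hex
    exact ⟨_, mem_of_sumOfNSquares h5, ⟨5, h5⟩, h4⟩
  · obtain ⟨h5, h4⟩ := part2 hex
    exact ⟨_, mem_of_sumOfNSquares h5, ⟨5, h5⟩, h4⟩
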